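/- arXiv:1805.09965 — 4 statements merged into one kernel-verified Lean document; each statement's English description precedes it below -/
import Mathlib

section
/- Let f : E → ℝ be differentiable and L-smooth. Let θ, e ∈ E, let α > 0, and set θ⁺ := θ − α(∇f(θ) + e). Then f(θ⁺) − f(θ) ≤ −(α/2)‖∇f(θ)‖² + (α/2)‖e‖² + (L/2 − 1/(2α))‖θ⁺ − θ‖². -/
open Finset

/-!
Smoothness bounds `f θ⁺ - f θ` by `⟪∇f θ, θ⁺ - θ⟫ + L / 2 * ‖θ⁺ - θ‖ ^ 2`. Since
`e = (∇f θ + e) - ∇f θ` and `θ⁺ - θ = -α (∇f θ + e)`, expanding `‖e‖ ^ 2` expresses the inner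
product through the squared norms of `∇f θ`, `e` and `θ⁺ - θ`.
-/

theorem le_quadratic_of_hasDerivAt_le_affine {φ φ' : ℝ → ℝ} {a b m C : ℝ} (hab : a ≤ b)
    (hφ : ∀ t ∈ Set.Icc a b, HasDerivAt φ (φ' t) t)
    (hφ' : ∀ t ∈ Set.Ico a b, φ' t ≤ m + C * (t - a)) :
    φ b ≤ φ a + m * (b - a) + C / 2 * (b - a) ^ 2 := by
  have hB (t : ℝ) : HasDerivAt (fun t ↦ φ a + m * (t - a) + C / 2 * (t - a) ^ 2)
      (m + C * (t - a)) t := by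
    have hsub : HasDerivAt (fun t ↦ t - a) 1 t := (hasDerivAt_id t).sub_const a
    refine (((hsub.const_mul m).const_add (φ a)).add
      ((hsub.pow 2).const_mul (C / 2))).congr_deriv ?_
    push_cast
    ring
  exact image_le_of_deriv_right_le_deriv_boundary
    (fun t ht ↦ (hφ t ht).continuousAt.continuousWithinAt)
    (fun t ht ↦ (hφ t (Set.Ico_subset_Icc_self ht)).hasDerivWithinAt)
    (by simp)
    (fun t _ ↦ (hB t).continuousAt.continuousWithinAt)
    (fun t _ ↦ (hB t).hasDerivWithinAt) hφ' (Set.right_mem_Icc.2 hab)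

theorem le_quadratic_of_norm_hasFDerivAt_sub_le {E : Type*} [NormedAddCommGroup E]
    [NormedSpace ℝ E] {f : E → ℝ} {f' : E → StrongDual ℝ E} {L : ℝ} {x y : E}
    (hf : ∀ z ∈ segment ℝ x y, HasFDerivAt f (f' z) z)
    (hL : ∀ z ∈ segment ℝ x y, ‖f' z - f' x‖ ≤ L * ‖z - x‖) :
    f y ≤ f x + f' x (y - x) + L / 2 * ‖y - x‖ ^ 2 := by
  let γ : ℝ → E := AffineMap.lineMap x y
  have hγ_mem {t : ℝ} (ht : t ∈ Set.Icc (0 : ℝ) 1) : γ t ∈ segment ℝ x y := by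
    rw [segment_eq_image_lineMap]
    exact Set.mem_image_of_mem _ ht
  have hγ_sub (t : ℝ) : γ t - x = t • (y - x) := AffineMap.lineMap_vsub_left x y t
  have hderiv : ∀ t ∈ Set.Icc (0 : ℝ) 1, HasDerivAt (f ∘ γ) (f' (γ t) (y - x)) t :=
    fun t ht ↦ (hf _ (hγ_mem ht)).comp_hasDerivAt t AffineMap.hasDerivAt_lineMap
  have hbound : ∀ t ∈ Set.Ico (0 : ℝ) 1,
      f' (γ t) (y - x) ≤ f' x (y - x) + L * ‖y - x‖ ^ 2 * (t - 0) := by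
    intro t ht
    rw [← sub_le_iff_le_add']
    calc f' (γ t) (y - x) - f' x (y - x)
        ≤ ‖(f' (γ t) - f' x) (y - x)‖ := le_abs_self _
      _ ≤ ‖f' (γ t) - f' x‖ * ‖y - x‖ := ContinuousLinearMap.le_opNorm _ _
      _ ≤ L * ‖γ t - x‖ * ‖y - x‖ := by
        gcongr
        exact hL _ (hγ_mem (Set.Ico_subset_Icc_self ht))
      _ = L * ‖y - x‖ ^ 2 * (t - 0) := by
        rw [hγ_sub, norm_smul, Real.norm_of_nonneg ht.1]
        ring
  convert le_quadratic_of_hasDerivAt_le_affine zero_le_one hderiv hbound using 1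
  · simp [γ]
  · simp only [γ, Function.comp_apply, AffineMap.lineMap_apply_zero]
    ring

theorem le_quadratic_of_norm_gradient_sub_le {E : Type*} [NormedAddCommGroup E]
    [InnerProductSpace ℝ E] [CompleteSpace E] {f : E → ℝ} {L : ℝ} {x y : E}
    (hf : ∀ z ∈ segment ℝ x y, DifferentiableAt ℝ f z)
    (hL : ∀ z ∈ segment ℝ x y, ‖gradient f z - gradient f x‖ ≤ L * ‖z - x‖) :
    f y ≤ f x + inner ℝ (gradient f x) (y - x) + L / 2 * ‖y - x‖ ^ 2 := by
  rw [inner_gradient_left]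
  refine le_quadratic_of_norm_hasFDerivAt_sub_le (fun z hz ↦ (hf z hz).hasFDerivAt) fun z hz ↦ ?_
  rw [← toDual_gradient, ← toDual_gradient, ← map_sub, LinearIsometryEquiv.norm_map]
  exact hL z hz

theorem inner_neg_smul_add_eq {E : Type*} [NormedAddCommGroup E] [InnerProductSpace ℝ E]
    (g e : E) {α : ℝ} (hα : α ≠ 0) :
    inner ℝ g (-(α • (g + e))) =
      -(α / 2) * ‖g‖ ^ 2 + α / 2 * ‖e‖ ^ 2 - 1 / (2 * α) * ‖-(α • (g + e))‖ ^ 2 := by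
  have hexpand : ‖e‖ ^ 2 = ‖g + e‖ ^ 2 - 2 * inner ℝ g (g + e) + ‖g‖ ^ 2 := by
    rw [real_inner_comm, ← norm_sub_sq_real, add_sub_cancel_left]
  rw [inner_neg_right, real_inner_smul_right, norm_neg, norm_smul, mul_pow, Real.norm_eq_abs,
    sq_abs, hexpand]
  field_simp
  ring

theorem lag_descent_in_objective_general {E : Type*} [NormedAddCommGroup E]
    [InnerProductSpace ℝ E] [CompleteSpace E] {f : E → ℝ} {L α : ℝ} {θ e θp : E}
    (hf : ∀ z ∈ segment ℝ θ θp, DifferentiableAt ℝ f z)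
    (hL : ∀ z ∈ segment ℝ θ θp, ‖gradient f z - gradient f θ‖ ≤ L * ‖z - θ‖)
    (hα : α ≠ 0) (hθp : θp = θ - α • (gradient f θ + e)) :
    f θp - f θ ≤ -(α / 2) * ‖gradient f θ‖ ^ 2 + (α / 2) * ‖e‖ ^ 2
      + (L / 2 - 1 / (2 * α)) * ‖θp - θ‖ ^ 2 := by
  have hstep : θp - θ = -(α • (gradient f θ + e)) := by rw [hθp, sub_sub_cancel_left]
  have hsmooth := le_quadratic_of_norm_gradient_sub_le hf hL
  have hinner := inner_neg_smul_add_eq (gradient f θ) e hα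
  rw [← hstep] at hinner
  linarith

/-- LAG descent lemma (Lemma 2): one LAG step equals a gradient step perturbed
by the aggregated staleness error `e`. -/
theorem lag_descent_in_objective {n : ℕ}
    (f : EuclideanSpace ℝ (Fin n) → ℝ) (L : ℝ)
    (hf : Differentiable ℝ f)
    (hL : ∀ x y, ‖gradient f x - gradient f y‖ ≤ L * ‖x - y‖)
    (θ e : EuclideanSpace ℝ (Fin n)) (α : ℝ) (hα : 0 < α)
    (θp : EuclideanSpace ℝ (Fin n))
    (hθp : θp = θ - α • (gradient f θ + e)) :
    f θp - f θ ≤ -(α / 2) * ‖gradient f θ‖ ^ 2 + (α / 2) * ‖e‖ ^ 2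
      + (L / 2 - 1 / (2 * α)) * ‖θp - θ‖ ^ 2 :=
  lag_descent_in_objective_general (fun z _ ↦ hf z) (fun z _ ↦ hL z θ) hα.ne' hθp
end

section
/- Assume the LAG setup with 0 < α ≤ 1/L and β_1 = (1 − αL)/(2α). Then for every k ≥ 1, V^{k+1} − V^k ≤ −(α/2)‖∇𝓛(θ^k)‖² − Σ_{d=1}^D (β_d − β_{d+1} − ξ_d/(2α)) ‖θ^{k+1−d} − θ^{k−d}‖². In particular, if in addition ξ_d ≤ 2α(β_d − β_{d+1}) for every d = 1, …, D, then V^{k+1} ≤ V^k for every k ≥ 1. -/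
open Finset

/-!
One LAG iteration is a gradient step `θ⁺ = θ - α s` with an inexact gradient `s`. Polarising the
inner product in the quadratic upper bound on `f(θ⁺)` gives
`f(θ⁺) ≤ f(θ) - α/2 ‖∇f(θ)‖² + α/2 ‖s - ∇f(θ)‖² - α(1 - αL)/2 ‖s‖²`.
The trigger bounds the gradient error by the `ξ`-weighted sum of past squared displacements. In the
Lyapunov function the newest displacement enters as `β₁ ‖θ⁺ - θ‖² = β₁ α² ‖s‖²`, which
`β₁ ≤ (1 - αL)/(2α)` lets the last term above absorb; every older displacement moves one place back
in the window, so that its weight changes from `β_d` to `β_{d+1}`.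
-/

section TaylorBound

variable {E F : Type*} [NormedAddCommGroup E] [NormedSpace ℝ E] [NormedAddCommGroup F]
  [NormedSpace ℝ F]

theorem norm_sub_sub_fderiv_le_half_mul_norm_sq {f : E → F} {f' : E → E →L[ℝ] F} {C : ℝ} {x y : E}
    (hf : ∀ z ∈ segment ℝ x y, HasFDerivAt f (f' z) z)
    (hC : ∀ z ∈ segment ℝ x y, ‖f' z - f' x‖ ≤ C * ‖z - x‖) :
    ‖f y - f x - f' x (y - x)‖ ≤ C / 2 * ‖y - x‖ ^ 2 := by
  let γ : ℝ → E := AffineMap.lineMap x y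
  have hγ_mem : ∀ t ∈ Set.Icc (0 : ℝ) 1, γ t ∈ segment ℝ x y := fun t ht ↦ by
    rw [segment_eq_image_lineMap]
    exact ⟨t, ht, rfl⟩
  have hγ_sub (t : ℝ) : γ t - x = t • (y - x) := AffineMap.lineMap_vsub_left x y t
  have hderiv : ∀ t ∈ Set.Icc (0 : ℝ) 1, HasDerivAt
      (fun t ↦ f (γ t) - f x - t • f' x (y - x)) (f' (γ t) (y - x) - f' x (y - x)) t :=
    fun t ht ↦ by
      simpa only [id_eq, one_smul, Function.comp_apply] using
        (((hf _ (hγ_mem t ht)).comp_hasDerivAt t AffineMap.hasDerivAt_lineMap).sub_const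
          (f x)).fun_sub ((hasDerivAt_id t).smul_const (f' x (y - x)))
  have hmajorant (t : ℝ) :
      HasDerivAt (fun t ↦ C / 2 * ‖y - x‖ ^ 2 * t ^ 2) (C * ‖y - x‖ ^ 2 * t) t :=
    ((hasDerivAt_pow 2 t).const_mul (C / 2 * ‖y - x‖ ^ 2)).congr_deriv (by norm_num; ring)
  have hbound : ∀ t ∈ Set.Ico (0 : ℝ) 1,
      ‖f' (γ t) (y - x) - f' x (y - x)‖ ≤ C * ‖y - x‖ ^ 2 * t := fun t ht ↦
    calc ‖f' (γ t) (y - x) - f' x (y - x)‖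
        ≤ ‖f' (γ t) - f' x‖ * ‖y - x‖ := (f' (γ t) - f' x).le_opNorm (y - x)
      _ ≤ C * ‖γ t - x‖ * ‖y - x‖ := by
        gcongr
        exact hC _ (hγ_mem t (Set.Ico_subset_Icc_self ht))
      _ = C * ‖y - x‖ ^ 2 * t := by
        rw [hγ_sub, norm_smul, Real.norm_of_nonneg ht.1]
        ring
  simpa [γ] using image_norm_le_of_norm_deriv_right_le_deriv_boundary
    (fun t ht ↦ (hderiv t ht).continuousAt.continuousWithinAt)
    (fun t ht ↦ (hderiv t (Set.Ico_subset_Icc_self ht)).hasDerivWithinAt)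
    (by simp [γ]) hmajorant hbound (Set.right_mem_Icc.2 zero_le_one)

end TaylorBound

section SumBound

variable {ι E : Type*} [SeminormedAddCommGroup E]

theorem norm_sum_sq_le_card_sq_mul {s : Finset ι} {u : ι → E} {c : ℝ}
    (h : ∀ i ∈ s, ‖u i‖ ^ 2 ≤ c) : ‖∑ i ∈ s, u i‖ ^ 2 ≤ (#s : ℝ) ^ 2 * c :=
  calc ‖∑ i ∈ s, u i‖ ^ 2 ≤ (∑ i ∈ s, ‖u i‖) ^ 2 := by gcongr; exact norm_sum_le _ _
    _ ≤ #s * ∑ i ∈ s, ‖u i‖ ^ 2 := sq_sum_le_card_mul_sum_sq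
    _ ≤ #s * (#s * c) := by
      gcongr
      simpa only [nsmul_eq_mul] using sum_le_card_nsmul s _ c h
    _ = (#s : ℝ) ^ 2 * c := by ring

theorem norm_sum_sub_sum_sq_le_of_trigger [Fintype ι] {Mc : Finset ι} {u v : ι → E} {α τ : ℝ}
    (hτ : 0 ≤ τ) (hfresh : ∀ m ∉ Mc, u m = v m)
    (htrig : ∀ m ∈ Mc, ‖u m - v m‖ ^ 2 ≤ 1 / (α ^ 2 * (Fintype.card ι : ℝ) ^ 2) * τ) :
    ‖∑ m, u m - ∑ m, v m‖ ^ 2 ≤ τ / α ^ 2 := by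
  have herror (m : ι) (_ : m ∈ univ) :
      ‖u m - v m‖ ^ 2 ≤ 1 / (α ^ 2 * (Fintype.card ι : ℝ) ^ 2) * τ := by
    by_cases hm : m ∈ Mc
    · exact htrig m hm
    · rw [hfresh m hm, sub_self, norm_zero, zero_pow two_ne_zero]
      positivity
  calc ‖∑ m, u m - ∑ m, v m‖ ^ 2
      ≤ (Fintype.card ι : ℝ) ^ 2 * (1 / (α ^ 2 * (Fintype.card ι : ℝ) ^ 2) * τ) := by
        rw [← sum_sub_distrib]
        exact norm_sum_sq_le_card_sq_mul herror
    _ = (Fintype.card ι : ℝ) ^ 2 / (Fintype.card ι : ℝ) ^ 2 * (τ / α ^ 2) := by ring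
    _ ≤ τ / α ^ 2 := mul_le_of_le_one_left (by positivity) (div_self_le_one _)

end SumBound

section WeightedSqSteps

variable {E : Type*} [SeminormedAddCommGroup E] {D : ℕ} {w : ℕ → ℝ}

/-- The weighted sum `∑_{d=1}^D w_d ‖θ^{k+1-d} - θ^{k-d}‖²` of the last `D` squared displacements
before time `k`. It gives the trigger threshold for `w = ξ` and the memory term of the Lyapunov
function for `w = β`. -/
def weightedSqSteps (D : ℕ) (w : ℕ → ℝ) (θ : ℤ → E) (k : ℤ) : ℝ :=
  ∑ d ∈ Icc 1 D, w d * ‖θ (k + 1 - (d : ℤ)) - θ (k - (d : ℤ))‖ ^ 2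

theorem weightedSqSteps_nonneg (hw : ∀ d ∈ Icc 1 D, 0 ≤ w d) (θ : ℤ → E) (k : ℤ) :
    0 ≤ weightedSqSteps D w θ k :=
  sum_nonneg fun d hd ↦ mul_nonneg (hw d hd) (sq_nonneg _)

theorem weightedSqSteps_add_one (D : ℕ) (w : ℕ → ℝ) (θ : ℤ → E) (k : ℤ) :
    weightedSqSteps D w θ (k + 1) = w 1 * ‖θ (k + 1) - θ k‖ ^ 2
      + weightedSqSteps D (fun d ↦ w (d + 1)) θ k
      - w (D + 1) * ‖θ (k + 1 - (D : ℤ)) - θ (k - (D : ℤ))‖ ^ 2 := by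
  induction D with
  | zero => simp [weightedSqSteps]
  | succ D ih =>
    simp only [weightedSqSteps] at ih ⊢
    rw [sum_Icc_succ_top (by lia), sum_Icc_succ_top (by lia), ih]
    have hlast : k + 1 + 1 - ((D + 1 : ℕ) : ℤ) = k + 1 - D := by lia
    have hprev : k + 1 - ((D + 1 : ℕ) : ℤ) = k - D := by lia
    rw [hlast, hprev]
    ring

theorem weightedSqSteps_sub_sub_div (D : ℕ) (w₁ w₂ w₃ : ℕ → ℝ) (c : ℝ) (θ : ℤ → E) (k : ℤ) :
    weightedSqSteps D (fun d ↦ w₁ d - w₂ d - w₃ d / c) θ k = weightedSqSteps D w₁ θ k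
      - weightedSqSteps D w₂ θ k - weightedSqSteps D w₃ θ k / c := by
  simp only [weightedSqSteps, sub_mul, div_mul_eq_mul_div, sum_sub_distrib, sum_div]

/-- The Lyapunov function `V^k = f(θ^k) - f* + ∑_{d=1}^D β_d ‖θ^{k+1-d} - θ^{k-d}‖²` of an iteration
`θ`. The reference value `fstar` is arbitrary, as it cancels in differences of `V`. -/
def lagLyapunov (f : E → ℝ) (fstar : ℝ) (D : ℕ) (β : ℕ → ℝ) (θ : ℤ → E) (k : ℤ) : ℝ :=
  f (θ k) - fstar + weightedSqSteps D β θ k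

end WeightedSqSteps

section Descent

open scoped Gradient RealInnerProductSpace

variable {E : Type*} [NormedAddCommGroup E] [InnerProductSpace ℝ E] [CompleteSpace E]

theorem gradient_fun_sum {ι : Type*} {s : Finset ι} {f : ι → E → ℝ} {x : E}
    (hf : ∀ i ∈ s, DifferentiableAt ℝ (f i) x) :
    ∇ (fun z ↦ ∑ i ∈ s, f i z) x = ∑ i ∈ s, ∇ (f i) x := by
  simp only [gradient, fderiv_fun_sum hf, map_sum]

variable {f : E → ℝ} {L α : ℝ}

theorem le_add_inner_gradient_add_norm_sq (hf : Differentiable ℝ f) {x : E}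
    (hL : ∀ y, ‖∇ f y - ∇ f x‖ ≤ L * ‖y - x‖) (y : E) :
    f y ≤ f x + ⟪∇ f x, y - x⟫ + L / 2 * ‖y - x‖ ^ 2 := by
  have htaylor : ‖f y - f x - fderiv ℝ f x (y - x)‖ ≤ L / 2 * ‖y - x‖ ^ 2 :=
    norm_sub_sub_fderiv_le_half_mul_norm_sq (fun z _ ↦ (hf z).hasFDerivAt) fun z _ ↦ by
      simpa only [← toDual_gradient, ← map_sub, LinearIsometryEquiv.norm_map] using hL z
  rw [inner_gradient_left]
  linarith [(Real.le_norm_self _).trans htaylor]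

theorem inexact_gradient_step_le (hf : Differentiable ℝ f) {x : E}
    (hL : ∀ y, ‖∇ f y - ∇ f x‖ ≤ L * ‖y - x‖) (α : ℝ) (s : E) :
    f (x - α • s) ≤ f x - α / 2 * ‖∇ f x‖ ^ 2 + α / 2 * ‖s - ∇ f x‖ ^ 2
      - α * (1 - α * L) / 2 * ‖s‖ ^ 2 :=
  calc f (x - α • s) ≤ f x - α * ⟪s, ∇ f x⟫ + L / 2 * (α ^ 2 * ‖s‖ ^ 2) := by
        simpa [inner_smul_right, real_inner_comm, norm_smul, mul_pow, ← sub_eq_add_neg] using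
          le_add_inner_gradient_add_norm_sq hf hL (x - α • s)
    _ = _ := by
        rw [norm_sub_sq_real]
        ring

theorem lagLyapunov_add_one_sub_le (hf : Differentiable ℝ f)
    (hL : ∀ x y, ‖∇ f x - ∇ f y‖ ≤ L * ‖x - y‖) (hα : 0 < α) {D : ℕ} {ξ β : ℕ → ℝ}
    (hβ1 : β 1 ≤ (1 - α * L) / (2 * α)) (hβD : β (D + 1) = 0) {θ : ℤ → E} {k : ℤ} {s : E}
    (hstep : θ (k + 1) = θ k - α • s)
    (herror : ‖s - ∇ f (θ k)‖ ^ 2 ≤ weightedSqSteps D ξ θ k / α ^ 2) (fstar : ℝ) :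
    lagLyapunov f fstar D β θ (k + 1) - lagLyapunov f fstar D β θ k
      ≤ -(α / 2) * ‖∇ f (θ k)‖ ^ 2
        - weightedSqSteps D (fun d ↦ β d - β (d + 1) - ξ d / (2 * α)) θ k := by
  have hdescent := inexact_gradient_step_le hf (fun y ↦ hL y (θ k)) α s
  have hgradient_error : α / 2 * ‖s - ∇ f (θ k)‖ ^ 2 ≤ weightedSqSteps D ξ θ k / (2 * α) :=
    calc _ ≤ α / 2 * (weightedSqSteps D ξ θ k / α ^ 2) := by gcongr
      _ = _ := by field_simp
  have hnew_step : β 1 * ‖θ (k + 1) - θ k‖ ^ 2 ≤ α * (1 - α * L) / 2 * ‖s‖ ^ 2 :=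
    calc β 1 * ‖θ (k + 1) - θ k‖ ^ 2 = β 1 * (α ^ 2 * ‖s‖ ^ 2) := by
          rw [hstep, sub_sub_cancel_left, norm_neg, norm_smul, mul_pow, Real.norm_eq_abs, sq_abs]
      _ ≤ (1 - α * L) / (2 * α) * (α ^ 2 * ‖s‖ ^ 2) := by gcongr
      _ = _ := by field_simp
  rw [← hstep] at hdescent
  rw [lagLyapunov, lagLyapunov, weightedSqSteps_add_one, hβD, weightedSqSteps_sub_sub_div]
  linarith

theorem lag_lyapunov_descent_general {ι : Type*} [Fintype ι] {D : ℕ} {Lf : ι → E → ℝ}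
    (hdiff : ∀ m, Differentiable ℝ (Lf m))
    (hsmooth : ∀ x y, ‖∇ (fun z ↦ ∑ m, Lf m z) x - ∇ (fun z ↦ ∑ m, Lf m z) y‖ ≤ L * ‖x - y‖)
    (hα : 0 < α) {ξ β : ℕ → ℝ} (hξ : ∀ d ∈ Icc 1 D, 0 ≤ ξ d) {θ : ℤ → E} {Mc : ℤ → Finset ι}
    {θhat : ℤ → ι → E} (hfresh : ∀ k : ℤ, 1 ≤ k → ∀ m ∉ Mc k, θhat k m = θ k)
    (hupd : ∀ k : ℤ, 1 ≤ k → θ (k + 1) = θ k - α • ∑ m, ∇ (Lf m) (θhat k m))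
    (htrig : ∀ k : ℤ, 1 ≤ k → ∀ m ∈ Mc k, ‖∇ (Lf m) (θhat k m) - ∇ (Lf m) (θ k)‖ ^ 2
      ≤ 1 / (α ^ 2 * (Fintype.card ι : ℝ) ^ 2) * weightedSqSteps D ξ θ k)
    (hβD : β (D + 1) = 0) (hβ1 : β 1 ≤ (1 - α * L) / (2 * α)) {Lstar : ℝ} {V : ℤ → ℝ}
    (hV : ∀ k, V k = lagLyapunov (fun z ↦ ∑ m, Lf m z) Lstar D β θ k) :
    (∀ k : ℤ, 1 ≤ k → V (k + 1) - V k ≤ -(α / 2) * ‖∇ (fun z ↦ ∑ m, Lf m z) (θ k)‖ ^ 2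
        - weightedSqSteps D (fun d ↦ β d - β (d + 1) - ξ d / (2 * α)) θ k) ∧
      ((∀ d ∈ Icc 1 D, ξ d ≤ 2 * α * (β d - β (d + 1))) → ∀ k : ℤ, 1 ≤ k → V (k + 1) ≤ V k) := by
  have hdescent (k : ℤ) (hk : 1 ≤ k) :
      V (k + 1) - V k ≤ -(α / 2) * ‖∇ (fun z ↦ ∑ m, Lf m z) (θ k)‖ ^ 2
        - weightedSqSteps D (fun d ↦ β d - β (d + 1) - ξ d / (2 * α)) θ k := by
    rw [hV, hV]
    refine lagLyapunov_add_one_sub_le (.fun_sum fun m _ ↦ hdiff m) hsmooth hα hβ1 hβD (hupd k hk)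
      ?_ Lstar
    rw [gradient_fun_sum fun m _ ↦ (hdiff m).differentiableAt]
    exact norm_sum_sub_sum_sq_le_of_trigger (weightedSqSteps_nonneg hξ θ k)
      (fun m hm ↦ by rw [hfresh k hk m hm]) (htrig k hk)
  refine ⟨hdescent, fun hξβ k hk ↦ ?_⟩
  have hweights : ∀ d ∈ Icc 1 D, 0 ≤ β d - β (d + 1) - ξ d / (2 * α) := fun d hd ↦ by
    rw [sub_nonneg, div_le_iff₀' (by positivity)]
    exact hξβ d hd
  have hgradient : 0 ≤ α / 2 * ‖∇ (fun z ↦ ∑ m, Lf m z) (θ k)‖ ^ 2 := by positivity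
  linarith [hdescent k hk, weightedSqSteps_nonneg hweights θ k]

end Descent

/-- LAG descent lemma (Lemma 3) with the parameter choice `β₁ = (1 − αL)/(2α)`. -/
theorem lag_lyapunov_descent {n : ℕ}
    (M D : ℕ) (hM : 1 ≤ M) (hD : 1 ≤ D)
    (Lf : Fin M → EuclideanSpace ℝ (Fin n) → ℝ)
    (hdiff : ∀ m, Differentiable ℝ (Lf m))
    (L : ℝ) (hL : 0 < L)
    (hsmooth : ∀ x y, ‖gradient (fun z => ∑ m, Lf m z) x
        - gradient (fun z => ∑ m, Lf m z) y‖ ≤ L * ‖x - y‖)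
    (α : ℝ) (hα : 0 < α) (hαL : α ≤ 1 / L)
    (ξ : ℕ → ℝ) (hξ : ∀ d ∈ Finset.Icc 1 D, 0 ≤ ξ d)
    (θ : ℤ → EuclideanSpace ℝ (Fin n))
    (hpast : ∀ k : ℤ, k ≤ 1 → θ k = θ 1)
    (Mc : ℤ → Finset (Fin M))
    (θhat : ℤ → Fin M → EuclideanSpace ℝ (Fin n))
    (hhat0 : ∀ m, θhat 0 m = θ 1)
    (hhat : ∀ k : ℤ, 1 ≤ k → ∀ m : Fin M,
      (m ∈ Mc k → θhat k m = θhat (k - 1) m) ∧ (m ∉ Mc k → θhat k m = θ k))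
    (hupd : ∀ k : ℤ, 1 ≤ k →
      θ (k + 1) = θ k - α • ∑ m, gradient (Lf m) (θhat k m))
    (htrig : ∀ k : ℤ, 1 ≤ k → ∀ m ∈ Mc k,
      ‖gradient (Lf m) (θhat k m) - gradient (Lf m) (θ k)‖ ^ 2
        ≤ (1 / (α ^ 2 * (M : ℝ) ^ 2)) *
            ∑ d ∈ Finset.Icc 1 D, ξ d * ‖θ (k + 1 - (d : ℤ)) - θ (k - (d : ℤ))‖ ^ 2)
    (β : ℕ → ℝ) (hβ : ∀ d ∈ Finset.Icc 1 D, 0 ≤ β d) (hβD : β (D + 1) = 0)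
    (hβ1 : β 1 = (1 - α * L) / (2 * α))
    (Lstar : ℝ)
    (V : ℤ → ℝ)
    (hV : ∀ k : ℤ, V k = (∑ m, Lf m (θ k)) - Lstar
      + ∑ d ∈ Finset.Icc 1 D, β d * ‖θ (k + 1 - (d : ℤ)) - θ (k - (d : ℤ))‖ ^ 2) :
    (∀ k : ℤ, 1 ≤ k →
      V (k + 1) - V k ≤ -(α / 2) * ‖gradient (fun z => ∑ m, Lf m z) (θ k)‖ ^ 2
        - ∑ d ∈ Finset.Icc 1 D,
            (β d - β (d + 1) - ξ d / (2 * α)) * ‖θ (k + 1 - (d : ℤ)) - θ (k - (d : ℤ))‖ ^ 2)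
    ∧ ((∀ d ∈ Finset.Icc 1 D, ξ d ≤ 2 * α * (β d - β (d + 1))) →
        ∀ k : ℤ, 1 ≤ k → V (k + 1) ≤ V k) :=
  lag_lyapunov_descent_general hdiff hsmooth hα hξ (fun k hk m ↦ (hhat k hk m).2) hupd
    (by simpa only [Fintype.card_fin, weightedSqSteps] using htrig) hβD hβ1.le hV
end

section
/- Let M ≥ 1 and D ≥ 1 be integers, let I ≥ 0 be a real number, let γ_1 ≥ γ_2 ≥ … ≥ γ_D be real numbers, and let H : {1, …, M} → ℝ and c : {1, …, M} → ℝ satisfy: 0 ≤ c_m ≤ I for all m, and c_m ≤ I/(d + 1) for every m and d ∈ {1, …, D} with H(m)² ≤ γ_d. Define h(γ) := |{m ∈ {1, …, M} : H(m)² ≤ γ}| / M. Then Σ_{m=1}^M c_m ≤ (1 − Σ_{d=1}^D (1/d − 1/(d+1)) h(γ_d)) · M · I. -/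
open Finset

/-!
Fix a worker `m`. The thresholds contribute the decrements `I / d - I / (d + 1)`, and the last
threshold `k` which the worker meets gives `c m ≤ I / (k + 1)`. All thresholds it meets lie in
`[1, k]`, so their decrements add up to at most the telescoping sum `I - I / (k + 1)`, hence to at
most `I - c m`, whichever thresholds below `k` are met. Summing over the workers and exchanging the
two sums, the decrement at `d` is counted once for each worker meeting the threshold `d`.
-/

section Antitone

variable {G : Type*} [AddCommGroup G] [PartialOrder G] [IsOrderedAddMonoid G]
  {u : ℕ → G} {a b : ℕ}

lemma sum_sub_succ_le_sub_of_antitoneOn (hu : AntitoneOn u (Set.Icc a b)) {s : Finset ℕ}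
    (hab : a ≤ b) (hs : s ⊆ Ico a b) : ∑ i ∈ s, (u i - u (i + 1)) ≤ u a - u b := by
  calc ∑ i ∈ s, (u i - u (i + 1))
      ≤ ∑ i ∈ Ico a b, (u i - u (i + 1)) := by
        refine sum_le_sum_of_subset_of_nonneg hs fun i hi _ => sub_nonneg.2 ?_
        rw [mem_Ico] at hi
        exact hu ⟨hi.1, hi.2.le⟩ ⟨by lia, hi.2⟩ i.le_succ
    _ = u a - u b := by
        rw [← neg_inj, ← sum_neg_distrib]
        simpa using sum_Ico_sub u hab

lemma le_sub_sum_sub_succ_of_antitoneOn (hu : AntitoneOn u (Set.Icc a b)) {s : Finset ℕ}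
    (hs : s ⊆ Ico a b) {x : G} (hxa : x ≤ u a) (hxs : ∀ i ∈ s, x ≤ u (i + 1)) :
    x ≤ u a - ∑ i ∈ s, (u i - u (i + 1)) := by
  obtain rfl | hne := s.eq_empty_or_nonempty
  · simpa using hxa
  · set k := s.max' hne
    have hk : k ∈ s := s.max'_mem hne
    obtain ⟨hak, hkb⟩ := mem_Ico.1 (hs hk)
    have hsk : s ⊆ Ico a (k + 1) := fun i hi =>
      mem_Ico.2 ⟨(mem_Ico.1 (hs hi)).1, Nat.lt_succ_of_le (s.le_max' i hi)⟩
    have hsum := sum_sub_succ_le_sub_of_antitoneOn (hu.mono (Set.Icc_subset_Icc_right hkb))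
      (by lia) hsk
    exact (hxs k hk).trans (le_sub_comm.1 hsum)

lemma sum_le_card_nsmul_sub_sum_card_filter_nsmul_of_antitoneOn {ι : Type*} (t : Finset ι)
    (hu : AntitoneOn u (Set.Icc a b)) (p : ι → ℕ → Prop) [∀ m, DecidablePred (p m)] {c : ι → G}
    (hca : ∀ m ∈ t, c m ≤ u a) (hcp : ∀ m ∈ t, ∀ i ∈ Ico a b, p m i → c m ≤ u (i + 1)) :
    ∑ m ∈ t, c m ≤ #t • u a - ∑ i ∈ Ico a b, #{m ∈ t | p m i} • (u i - u (i + 1)) := by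
  calc ∑ m ∈ t, c m
      ≤ ∑ m ∈ t, (u a - ∑ i ∈ Ico a b with p m i, (u i - u (i + 1))) :=
        sum_le_sum fun m hm =>
          le_sub_sum_sub_succ_of_antitoneOn hu (filter_subset _ _) (hca m hm) fun i hi =>
            hcp m hm i (mem_filter.1 hi).1 (mem_filter.1 hi).2
    _ = #t • u a - ∑ i ∈ Ico a b, #{m ∈ t | p m i} • (u i - u (i + 1)) := by
        simp only [sum_sub_distrib (fun _ => u a), sum_const, sum_filter]
        rw [sum_comm]
        simp only [← sum_filter, sum_const]

end Antitone

section Field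

variable {K : Type*} [Field K] [LinearOrder K] [IsStrictOrderedRing K]

lemma antitoneOn_div_natCast {I : K} (hI : 0 ≤ I) (n : ℕ) :
    AntitoneOn (fun d : ℕ => I / d) (Set.Icc 1 n) := fun _ hd _ _ hde =>
  div_le_div_of_nonneg_left hI (Nat.cast_pos.2 hd.1) (Nat.cast_le.2 hde)

theorem lag_communication_complexity_general {ι : Type*} [Fintype ι] [Nonempty ι] (D : ℕ)
    {I : K} (hI : 0 ≤ I) (p : ι → ℕ → Prop) [∀ m, DecidablePred (p m)] {c : ι → K}
    (hcI : ∀ m, c m ≤ I) (hcd : ∀ m, ∀ d ∈ Icc 1 D, p m d → c m ≤ I / ((d : K) + 1)) :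
    ∑ m, c m
      ≤ (1 - ∑ d ∈ Icc 1 D, (1 / (d : K) - 1 / ((d : K) + 1)) *
            ((#{m | p m d} : K) / (Fintype.card ι : K)))
          * (Fintype.card ι : K) * I := by
  have hcard : (Fintype.card ι : K) ≠ 0 := Nat.cast_ne_zero.2 Fintype.card_ne_zero
  have hbound := sum_le_card_nsmul_sub_sum_card_filter_nsmul_of_antitoneOn univ
    (antitoneOn_div_natCast hI (D + 1)) p (c := c) (by simpa using hcI)
    (by simpa [Ico_add_one_right_eq_Icc] using hcd)
  rw [Ico_add_one_right_eq_Icc] at hbound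
  refine hbound.trans_eq ?_
  rw [mul_assoc, sub_mul, one_mul, sum_mul]
  congr 1
  · simp
  · refine sum_congr rfl fun d _ => ?_
    rw [nsmul_eq_mul, Nat.cast_add_one]
    field_simp

end Field

/-- Proposition 1 (communication complexity): the total number of communication
rounds is bounded by `(1 − ΔC̄(h; {γ_d})) · M · 𝕀`. -/
theorem lag_communication_complexity
    (M D : ℕ) (hM : 1 ≤ M) (hD : 1 ≤ D)
    (I : ℝ) (hI : 0 ≤ I)
    (γ : ℕ → ℝ)
    (hγmono : ∀ d : ℕ, 1 ≤ d → d < D → γ (d + 1) ≤ γ d)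
    (H c : Fin M → ℝ)
    (hc0 : ∀ m, 0 ≤ c m) (hcI : ∀ m, c m ≤ I)
    (hcd : ∀ m : Fin M, ∀ d ∈ Finset.Icc 1 D,
      H m ^ 2 ≤ γ d → c m ≤ I / ((d : ℝ) + 1)) :
    ∑ m, c m
      ≤ (1 - ∑ d ∈ Finset.Icc 1 D,
            (1 / (d : ℝ) - 1 / ((d : ℝ) + 1)) *
              (((Finset.univ.filter (fun m : Fin M => H m ^ 2 ≤ γ d)).card : ℝ) / (M : ℝ)))
          * (M : ℝ) * I := by
  have : Nonempty (Fin M) := ⟨⟨0, hM⟩⟩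
  simpa only [Fintype.card_fin] using
    lag_communication_complexity_general D hI (fun m d => H m ^ 2 ≤ γ d) hcI hcd
end

section
/- Let a : ℕ → ℝ be a nonnegative summable sequence (Σ_{k=1}^∞ a_k < ∞). Then lim_{K→∞} K · min_{1 ≤ k ≤ K} a_k = 0. -/
/-!
At least half of the indices `1, …, K` lie in `(K / 2, K]`, so `K` times the minimum is at most
twice the sum of the sequence over that block. These block sums tend to zero by the Cauchy
criterion, because the blocks eventually leave every finite set of indices.
-/

open Filter Finset Topology

theorem tendsto_sum_zero_of_eventually_notMem {α ι G : Type*} [AddCommGroup G]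
    [TopologicalSpace G] [IsTopologicalAddGroup G] {f : α → G} {l : Filter ι} {s : ι → Finset α}
    (hf : Summable f) (hs : ∀ x, ∀ᶠ i in l, x ∉ s i) :
    Tendsto (fun i ↦ ∑ x ∈ s i, f x) l (𝓝 0) := by
  refine tendsto_def.2 fun U hU ↦ ?_
  obtain ⟨t, ht⟩ := hf.vanishing hU
  have h_disjoint : ∀ᶠ i in l, ∀ x ∈ t, x ∉ s i :=
    (eventually_all_finset t).2 fun x _ ↦ hs x
  filter_upwards [h_disjoint] with i hi
  exact ht (s i) (disjoint_right.2 hi)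

theorem eventually_notMem_Ioc_half (k : ℕ) : ∀ᶠ n : ℕ in atTop, k ∉ Ioc (n / 2) n := by
  filter_upwards [(Nat.tendsto_div_const_atTop two_ne_zero).eventually_ge_atTop k] with n hn h
  exact (mem_Ioc.1 h).1.not_ge hn

theorem nsmul_le_two_nsmul_sum_Ioc_half {M : Type*} [AddCommMonoid M] [PartialOrder M]
    [IsOrderedAddMonoid M] {f : ℕ → M} {m : M} {n : ℕ} (hm : 0 ≤ m)
    (hmf : ∀ k ∈ Ioc (n / 2) n, m ≤ f k) :
    n • m ≤ 2 • ∑ k ∈ Ioc (n / 2) n, f k := by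
  have h_half : n ≤ #(Ioc (n / 2) n) * 2 := by
    rw [Nat.card_Ioc]
    omega
  calc n • m ≤ (#(Ioc (n / 2) n) * 2) • m := nsmul_le_nsmul_left hm h_half
    _ = 2 • (#(Ioc (n / 2) n) • m) := mul_nsmul m _ _
    _ ≤ 2 • ∑ k ∈ Ioc (n / 2) n, f k := nsmul_le_nsmul_right (card_nsmul_le_sum _ f m hmf) 2

theorem tendsto_nsmul_zero_of_le_Ioc_half {G : Type*} [AddCommGroup G] [PartialOrder G]
    [IsOrderedAddMonoid G] [TopologicalSpace G] [IsTopologicalAddGroup G] [OrderTopology G]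
    {f m : ℕ → G} (hf : Summable f) (hm : ∀ n, 0 ≤ m n)
    (hmf : ∀ n, ∀ k ∈ Ioc (n / 2) n, m n ≤ f k) :
    Tendsto (fun n ↦ n • m n) atTop (𝓝 0) := by
  have h_block : Tendsto (fun n ↦ 2 • ∑ k ∈ Ioc (n / 2) n, f k) atTop (𝓝 0) := by
    simpa only [nsmul_zero] using
      (tendsto_sum_zero_of_eventually_notMem hf eventually_notMem_Ioc_half).nsmul 2
  exact tendsto_of_tendsto_of_tendsto_of_le_of_le tendsto_const_nhds h_block
    (fun n ↦ nsmul_nonneg (hm n) n) fun n ↦ nsmul_le_two_nsmul_sum_Ioc_half (hm n) (hmf n)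

/-- Summability implication (Lemma 3 of Davis–Yin): for a nonnegative summable
sequence, `K · min_{1 ≤ k ≤ K} a_k → 0`. -/
theorem summable_min_o_one_div
    (a : ℕ → ℝ) (ha : ∀ k, 0 ≤ a k) (hsum : Summable a) :
    Filter.Tendsto (fun K : ℕ => (K : ℝ) * sInf (a '' Set.Icc 1 K))
      Filter.atTop (nhds 0) := by
  have h_nonneg (K : ℕ) : ∀ x ∈ a '' Set.Icc 1 K, 0 ≤ x :=
    Set.forall_mem_image.2 fun k _ ↦ ha k
  have h_le (K k : ℕ) (hk : k ∈ Ioc (K / 2) K) : sInf (a '' Set.Icc 1 K) ≤ a k := by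
    obtain ⟨h_lower, h_upper⟩ := mem_Ioc.1 hk
    exact csInf_le ⟨0, h_nonneg K⟩
      (Set.mem_image_of_mem a ⟨Nat.one_le_of_lt h_lower, h_upper⟩)
  simpa only [nsmul_eq_mul] using
    tendsto_nsmul_zero_of_le_Ioc_half hsum (fun K ↦ Real.sInf_nonneg (h_nonneg K)) h_le
end
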